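/- Let d ≥ 2, let α be an irrational vector in ℝ^d, and let v = (v₁, …, v_d) ∈ ℤα + ℤ^d with v ∉ ℤ^d (so that v_d ≠ 0). Let Σ ⊆ ℝ^{d−1} be a bounded measurable set which is a bounded remainder set with respect to the vector (v₁/v_d, v₂/v_d, …, v_{d−1}/v_d) ∈ ℝ^{d−1}. Then the cylindric set S = {(x, 0) + t·v : x ∈ Σ, 0 ≤ t < 1} ⊆ ℝ^d is a bounded remainder set with respect to α. -/

import Mathlib

/-!
Write `w = (v₁/v_{d+1}, …, v_d/v_{d+1})` and `c = v_{d+1}`; irrationality of `α` gives `c ≠ 0`.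

The shear `Φ (x, s) = (s, x - s w)` is measure preserving (`measurePreserving_shear`), and the
cylinder is `Φ⁻¹(J × B)` with `J = {s : 0 ≤ s / c < 1}` (`cyl_eq_preimage`). Hence its volume is
`|c| · Leb B` (`volume_cyl`). Translating by `v` moves the first coordinate of `Φ` by `c` and fixes
the second one, so the translates of `J` by `0, -c, …, -(n-1)c` tile an interval of length `n|c|`,
and summing over `ℤ^d × ℤ` gives
`∑_{j<n} χ_S(y + j v) = ∑_{a ≤ m < b} χ_B(z - m w)`, where `z = x - s w` for `y = (x, s)`, and the
number `b - a` of consecutive integers `m` differs from `n|c|` by at most `1` (`sum_multFn_cyl`).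
The remainder property of `B` along `w` therefore bounds the discrepancy of the cylinder along `v`
by `C + Leb B` (`isBRS_cyl`).

Finally, `v ≡ q α` modulo `ℤ^{d+1}` with `q ≠ 0`, and an orbit of length `n` of the rotation by `α`
is, up to fewer than `|q|` points, a union of `|q|` orbits of the rotation by `|q| α`; each of these
is an orbit of the rotation by `v`, traversed backwards when `q < 0` (`isBRS_of_lat`).
-/

open MeasureTheory

/-- The multiplicity function of the projection of `S ⊆ ℝ^d` to the torus `ℝ^d/ℤ^d`,
viewed as a `ℤ^d`-periodic function on `ℝ^d`. -/
noncomputable def multFn {d : ℕ} (S : Set (Fin d → ℝ)) (x : Fin d → ℝ) : ℝ :=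
  ∑' k : Fin d → ℤ, Set.indicator S (fun _ => (1 : ℝ)) (x + fun i => (k i : ℝ))

/-- The discrepancy `∑_{k=0}^{n-1} χ_S(x + k v) − n · Leb(S)`. -/
noncomputable def disc {d : ℕ} (v : Fin d → ℝ) (S : Set (Fin d → ℝ)) (n : ℕ)
    (x : Fin d → ℝ) : ℝ :=
  (∑ k ∈ Finset.range n, multFn S (x + (k : ℝ) • v)) - n * (volume S).toReal

/-- `S` is a bounded remainder set with respect to the vector `v`. -/
def IsBRS {d : ℕ} (v : Fin d → ℝ) (S : Set (Fin d → ℝ)) : Prop :=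
  ∃ C : ℝ, ∀ᵐ x : Fin d → ℝ, ∀ n : ℕ, 1 ≤ n → |disc v S n x| ≤ C

/-- `α ∈ ℝ^d` is an irrational vector: `1, α₁, …, α_d` are linearly independent over `ℚ`. -/
def IsIrrationalVector {d : ℕ} (α : Fin d → ℝ) : Prop :=
  ∀ (n₀ : ℤ) (n : Fin d → ℤ), (n₀ : ℝ) + ∑ i, (n i : ℝ) * α i = 0 → n₀ = 0 ∧ n = 0

/-- The subgroup `ℤα + ℤ^d` of `ℝ^d`. -/
def lat {d : ℕ} (α : Fin d → ℝ) : Set (Fin d → ℝ) :=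
  {v | ∃ (q : ℤ) (p : Fin d → ℤ), v = (q : ℝ) • α + fun i => (p i : ℝ)}

/-- The parallelepiped spanned by the vectors `v 1, …, v d`. -/
def paral {d : ℕ} (v : Fin d → Fin d → ℝ) : Set (Fin d → ℝ) :=
  {x | ∃ t : Fin d → ℝ, (∀ k, 0 ≤ t k ∧ t k < 1) ∧ x = ∑ k, t k • v k}

/-- A `ℤ^d`-periodic function on `ℝ^d`, i.e. a function on the torus. -/
def IsZdPeriodic {d : ℕ} (g : (Fin d → ℝ) → ℝ) : Prop :=
  ∀ (x : Fin d → ℝ) (k : Fin d → ℤ), g (x + fun i => (k i : ℝ)) = g x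

/-- `g` is a transfer function for `S` with respect to `v`:
a function on the torus with `χ_S(x) − Leb S = g(x) − g(x−v)` a.e. -/
def IsTransfer {d : ℕ} (v : Fin d → ℝ) (S : Set (Fin d → ℝ)) (g : (Fin d → ℝ) → ℝ) : Prop :=
  IsZdPeriodic g ∧
    ∀ᵐ x : Fin d → ℝ, multFn S x - (volume S).toReal = g x - g (x - v)

/-- A bounded function whose set of discontinuity points is Lebesgue-null. -/
def RiemannIntegrableFn {d : ℕ} (g : (Fin d → ℝ) → ℝ) : Prop :=
  (∃ M : ℝ, ∀ x, |g x| ≤ M) ∧ volume {x | ¬ ContinuousAt g x} = 0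

/-- A bounded set is Riemann measurable if its boundary is Lebesgue-null. -/
def IsRiemannMeasurable {d : ℕ} (S : Set (Fin d → ℝ)) : Prop :=
  Bornology.IsBounded S ∧ volume (frontier S) = 0

/-- `S` and `S'` are equidecomposable, with pieces satisfying the predicate `P`,
using translations by vectors in `Γ`. -/
def EquidecompBy {d : ℕ} (P : Set (Fin d → ℝ) → Prop)
    (S S' : Set (Fin d → ℝ)) (Γ : Set (Fin d → ℝ)) : Prop :=
  ∃ (N : ℕ) (A : Fin N → Set (Fin d → ℝ)) (γ : Fin N → Fin d → ℝ),
    (∀ i, P (A i)) ∧ (∀ i, γ i ∈ Γ) ∧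
    (∀ i j, i ≠ j → volume (A i ∩ A j) = 0) ∧
    volume (symmDiff S (⋃ i, A i)) = 0 ∧
    (∀ i j, i ≠ j → volume (((fun x => x + γ i) '' A i) ∩ ((fun x => x + γ j) '' A j)) = 0) ∧
    volume (symmDiff S' (⋃ i, (fun x => x + γ i) '' A i)) = 0

/-- A set is centrally symmetric if it equals its reflection about some point `c`. -/
def IsCentrallySymmetric {d : ℕ} (A : Set (Fin d → ℝ)) : Prop :=
  ∃ c : Fin d → ℝ, ∀ x, x ∈ A ↔ (2 : ℝ) • c - x ∈ A


/-! ### The multiplicity function -/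

lemma summable_indicator {d : ℕ} {S : Set (Fin d → ℝ)} (hS : Bornology.IsBounded S)
    (x : Fin d → ℝ) :
    Summable fun k : Fin d → ℤ => S.indicator (fun _ => (1 : ℝ)) (x + fun i => (k i : ℝ)) := by
  obtain ⟨R, hR⟩ := hS.subset_closedBall 0
  apply summable_of_hasFiniteSupport
  refine (Set.finite_Icc (fun i => ⌈-R - x i⌉) (fun i => ⌊R - x i⌋)).subset ?_
  intro k hk
  have hmem : (x + fun i => (k i : ℝ)) ∈ S := by
    by_contra h
    exact hk (Set.indicator_of_notMem h _)
  have hnorm := mem_closedBall_zero_iff.1 (hR hmem)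
  have hi : ∀ i, |x i + k i| ≤ R := fun i => (norm_le_pi_norm _ i).trans hnorm
  constructor
  · intro i
    have := abs_le.1 (hi i)
    exact Int.ceil_le.2 (by linarith)
  · intro i
    have := abs_le.1 (hi i)
    exact Int.le_floor.2 (by linarith)

lemma multFn_add_int {d : ℕ} (S : Set (Fin d → ℝ)) (x : Fin d → ℝ) (p : Fin d → ℤ) :
    multFn S (x + fun i => (p i : ℝ)) = multFn S x := by
  unfold multFn
  rw [← (Equiv.addLeft p).tsum_eq
    (fun k : Fin d → ℤ => S.indicator (fun _ => (1 : ℝ)) (x + fun i => (k i : ℝ)))]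
  refine tsum_congr fun k => ?_
  congr 1
  ext i
  simp [add_assoc]

/-! ### The cylinder and the shear -/

/-- The cylinder over `B` with axis `v`. -/
def cyl {d : ℕ} (v : Fin (d + 1) → ℝ) (B : Set (Fin d → ℝ)) : Set (Fin (d + 1) → ℝ) :=
  {y | ∃ x ∈ B, ∃ t : ℝ, 0 ≤ t ∧ t < 1 ∧ y = Fin.snoc x (0 : ℝ) + t • v}

/-- The slope `(v₁/v_{d+1}, …, v_d/v_{d+1})` of `v`. -/
noncomputable def slope' {d : ℕ} (v : Fin (d + 1) → ℝ) : Fin d → ℝ :=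
  fun i => v (Fin.castSucc i) / v (Fin.last d)

/-- The shear `(x, s) ↦ (s, x - s w)`, where `w` is the slope of `v`: it records the height of a
point and its projection along `v` to the hyperplane `s = 0`. -/
noncomputable def shear {d : ℕ} (v y : Fin (d + 1) → ℝ) : ℝ × (Fin d → ℝ) :=
  (y (Fin.last d), Fin.init y - y (Fin.last d) • slope' v)

/-- The heights of the points of a cylinder of height `c`; this is `[0, c)` or `(c, 0]`. -/
def heights (c : ℝ) : Set ℝ := {s | 0 ≤ s / c ∧ s / c < 1}

lemma heights_of_pos {c : ℝ} (hc : 0 < c) : heights c = Set.Ico 0 c := by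
  ext s
  simp only [heights, Set.mem_ofPred_eq, Set.mem_Ico, div_lt_one hc, le_div_iff₀ hc, zero_mul]

lemma heights_of_neg {c : ℝ} (hc : c < 0) : heights c = Set.Ioc c 0 := by
  ext s
  simp only [heights, Set.mem_ofPred_eq, Set.mem_Ioc, div_lt_one_of_neg hc, le_div_iff_of_neg hc,
    zero_mul]
  tauto

lemma measurableSet_heights {c : ℝ} (hc : c ≠ 0) : MeasurableSet (heights c) := by
  rcases lt_or_gt_of_ne hc with h | h
  · rw [heights_of_neg h]; exact measurableSet_Ioc
  · rw [heights_of_pos h]; exact measurableSet_Ico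

lemma volume_heights {c : ℝ} (hc : c ≠ 0) : volume (heights c) = ENNReal.ofReal |c| := by
  rcases lt_or_gt_of_ne hc with h | h
  · rw [heights_of_neg h, Real.volume_Ioc, abs_of_neg h, zero_sub]
  · rw [heights_of_pos h, Real.volume_Ico, abs_of_pos h, sub_zero]

lemma measurePreserving_shear {d : ℕ} (v : Fin (d + 1) → ℝ) :
    MeasurePreserving (shear v) := by
  have h1 := volume_preserving_piFinSuccAbove (fun _ : Fin (d + 1) => ℝ) (Fin.last d)
  have h2 : MeasurePreserving
      (fun p : ℝ × (Fin d → ℝ) => (p.1, p.2 - p.1 • slope' v))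
      (volume.prod volume) (volume.prod volume) := by
    refine (MeasurePreserving.id volume).skew_product
      (g := fun s x => x - s • slope' v) ?_ ?_
    · simp only [Function.uncurry_def]
      fun_prop
    · exact Filter.Eventually.of_forall fun s =>
        (measurePreserving_sub_right volume (s • slope' v)).map_eq
  have h3 := h2.comp h1
  rw [← Measure.volume_eq_prod] at h3
  convert h3 using 1
  ext y i
  · simp [shear]
  · simp [shear, Fin.init, MeasurableEquiv.piFinSuccAbove, Fin.insertNthEquiv]

lemma cyl_eq_preimage {d : ℕ} {v : Fin (d + 1) → ℝ} (hc : v (Fin.last d) ≠ 0)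
    (B : Set (Fin d → ℝ)) :
    cyl v B = shear v ⁻¹' (heights (v (Fin.last d)) ×ˢ B) := by
  ext y
  simp only [cyl, heights, shear, Set.mem_ofPred_eq, Set.mem_preimage, Set.mem_prod]
  constructor
  · rintro ⟨x, hx, t, ht0, ht1, rfl⟩
    have e : Fin.init (Fin.snoc x (0 : ℝ) + t • v)
        - (Fin.snoc x (0 : ℝ) + t • v : Fin (d + 1) → ℝ) (Fin.last d) • slope' v = x := by
      ext i
      simp only [Fin.init, slope', Pi.sub_apply, Pi.add_apply, Pi.smul_apply, smul_eq_mul,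
        Fin.snoc_castSucc, Fin.snoc_last]
      field_simp
      ring
    rw [e]
    simp only [Pi.add_apply, Pi.smul_apply, smul_eq_mul, Fin.snoc_last, zero_add,
      mul_div_cancel_right₀ _ hc]
    exact ⟨⟨ht0, ht1⟩, hx⟩
  · rintro ⟨⟨h0, h1⟩, hx⟩
    refine ⟨_, hx, _, h0, h1, ?_⟩
    ext i
    refine Fin.lastCases ?_ (fun i => ?_) i
    · simp [hc]
    · simp only [Fin.init, slope', Pi.sub_apply, Pi.add_apply, Pi.smul_apply, smul_eq_mul,
        Fin.snoc_castSucc]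
      field_simp
      ring

lemma volume_cyl {d : ℕ} {v : Fin (d + 1) → ℝ} (hc : v (Fin.last d) ≠ 0)
    {B : Set (Fin d → ℝ)} (hB : MeasurableSet B) :
    (volume (cyl v B)).toReal = |v (Fin.last d)| * (volume B).toReal := by
  rw [cyl_eq_preimage hc, (measurePreserving_shear v).measure_preimage
    ((measurableSet_heights hc).prod hB).nullMeasurableSet, Measure.volume_eq_prod,
    Measure.prod_prod, ENNReal.toReal_mul, volume_heights hc, ENNReal.toReal_ofReal (abs_nonneg _)]

lemma isBounded_cyl {d : ℕ} (v : Fin (d + 1) → ℝ) {B : Set (Fin d → ℝ)}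
    (hB : Bornology.IsBounded B) : Bornology.IsBounded (cyl v B) := by
  obtain ⟨R, hR⟩ := hB.subset_closedBall 0
  refine (Metric.isBounded_closedBall (x := (0 : Fin (d + 1) → ℝ)) (r := |R| + ‖v‖)).subset ?_
  rintro y ⟨x, hx, t, ht0, ht1, rfl⟩
  have hxR := mem_closedBall_zero_iff.1 (hR hx)
  rw [mem_closedBall_zero_iff]
  refine (norm_add_le _ _).trans (add_le_add ?_ ?_)
  · refine (pi_norm_le_iff_of_nonneg (abs_nonneg R)).2 fun i => ?_
    refine Fin.lastCases ?_ (fun i => ?_) i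
    · simp
    · simpa using ((norm_le_pi_norm x i).trans hxR).trans (le_abs_self R)
  · rw [norm_smul, Real.norm_of_nonneg ht0]
    exact mul_le_of_le_one_left (norm_nonneg v) ht1.le

/-! ### Counting visits to the cylinder along `v` -/

lemma sum_unit_interval (r : ℝ) (n : ℕ) :
    (∑ j ∈ Finset.range n, if 0 ≤ r + j ∧ r + j < 1 then (1 : ℝ) else 0)
      = if 1 - (n : ℝ) ≤ r ∧ r < 1 then 1 else 0 := by
  induction n with
  | zero =>
    rw [Finset.sum_range_zero, if_neg]
    push_cast
    intro h
    linarith [h.1, h.2]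
  | succ n ih =>
    rw [Finset.sum_range_succ, ih]
    have hn : (0 : ℝ) ≤ n := n.cast_nonneg
    push_cast
    by_cases h1 : 1 - (n : ℝ) ≤ r ∧ r < 1
    · rw [if_pos h1, if_neg (by intro h; linarith [h1.1, h.2]),
        if_pos ⟨by linarith [h1.1], h1.2⟩, add_zero]
    · rw [if_neg h1, zero_add]
      congr 1
      rw [eq_iff_iff]
      constructor
      · rintro ⟨h, h'⟩
        exact ⟨by linarith, by linarith⟩
      · rintro ⟨h, h'⟩
        refine ⟨by linarith, ?_⟩
        by_contra h''
        exact h1 ⟨by linarith, h'⟩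

/-- The integers `m` for which `s + m` lies in one of the first `n` translates of the height
interval form an interval whose cardinality is within `1` of the total length `n |c|`. -/
lemma exists_window {c : ℝ} (hc : c ≠ 0) (s : ℝ) (n : ℕ) :
    ∃ a b : ℤ, a ≤ b ∧ |(((b : ℝ) - a) - n * |c|)| ≤ 1 ∧ ∀ m : ℤ,
      (∑ j ∈ Finset.range n, (heights c).indicator (fun _ => (1 : ℝ)) (s + m + j * c))
        = if m ∈ Finset.Ico a b then 1 else 0 := by
  have key : ∀ m : ℤ,
      (∑ j ∈ Finset.range n, (heights c).indicator (fun _ => (1 : ℝ)) (s + m + j * c))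
        = if 1 - (n : ℝ) ≤ (s + m) / c ∧ (s + m) / c < 1 then 1 else 0 := by
    intro m
    rw [← sum_unit_interval]
    refine Finset.sum_congr rfl fun j _ => ?_
    classical
    rw [Set.indicator_apply]
    simp only [heights, Set.mem_ofPred_eq, add_div _ ((j : ℝ) * c), mul_div_cancel_right₀ _ hc]
  have hn : (0 : ℝ) ≤ n := n.cast_nonneg
  rcases lt_or_gt_of_ne hc with h | h
  · have hnc : n * c ≤ 0 := mul_nonpos_of_nonneg_of_nonpos hn h.le
    refine ⟨⌊c - s⌋ + 1, ⌊(1 - n) * c - s⌋ + 1, ?_, ?_, fun m => ?_⟩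
    · have : ⌊c - s⌋ ≤ ⌊(1 - n) * c - s⌋ := Int.floor_le_floor (by linarith)
      omega
    · have h1 := Int.floor_le (c - s)
      have h2 := Int.lt_floor_add_one (c - s)
      have h3 := Int.floor_le ((1 - n) * c - s)
      have h4 := Int.lt_floor_add_one ((1 - n) * c - s)
      rw [abs_of_neg h, abs_le]
      push_cast
      constructor <;> linarith
    · rw [key]
      congr 1
      rw [eq_iff_iff, Finset.mem_Ico, le_div_iff_of_neg h, div_lt_one_of_neg h,
        Int.add_one_le_iff, Int.floor_lt, Int.lt_add_one_iff, Int.le_floor]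
      constructor
      · rintro ⟨h1, h2⟩
        exact ⟨by linarith, by linarith⟩
      · rintro ⟨h1, h2⟩
        exact ⟨by linarith, by linarith⟩
  · have hnc : 0 ≤ n * c := mul_nonneg hn h.le
    refine ⟨⌈(1 - n) * c - s⌉, ⌈c - s⌉, ?_, ?_, fun m => ?_⟩
    · exact Int.ceil_le_ceil (by linarith)
    · have h1 := Int.le_ceil (c - s)
      have h2 := Int.ceil_lt_add_one (c - s)
      have h3 := Int.le_ceil ((1 - n) * c - s)
      have h4 := Int.ceil_lt_add_one ((1 - n) * c - s)
      rw [abs_of_pos h, abs_le]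
      constructor <;> linarith
    · rw [key]
      congr 1
      rw [eq_iff_iff, Finset.mem_Ico, le_div_iff₀ h, div_lt_one h, Int.ceil_le, Int.lt_ceil]
      constructor
      · rintro ⟨h1, h2⟩
        exact ⟨by linarith, by linarith⟩
      · rintro ⟨h1, h2⟩
        exact ⟨by linarith, by linarith⟩

/-- Visits to the cylinder along `v` count as visits to its base along the slope of `v`. -/
lemma sum_multFn_cyl {d : ℕ} {v : Fin (d + 1) → ℝ} (hc : v (Fin.last d) ≠ 0)
    {B : Set (Fin d → ℝ)} (hB : Bornology.IsBounded B) (y : Fin (d + 1) → ℝ) (n : ℕ) :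
    ∃ a b : ℤ, a ≤ b ∧ |(((b : ℝ) - a) - n * |v (Fin.last d)|)| ≤ 1 ∧
      ∑ j ∈ Finset.range n, multFn (cyl v B) (y + (j : ℝ) • v)
        = ∑ m ∈ Finset.Ico a b, multFn B ((shear v y).2 - (m : ℝ) • slope' v) := by
  obtain ⟨a, b, hab, hlen, hwin⟩ := exists_window hc (y (Fin.last d)) n
  refine ⟨a, b, hab, hlen, ?_⟩
  set F : ℤ × (Fin d → ℤ) → ℝ := fun p =>
    (if p.1 ∈ Finset.Ico a b then 1 else 0) *
      B.indicator (fun _ => (1 : ℝ))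
        ((shear v y).2 - (p.1 : ℝ) • slope' v + fun i => (p.2 i : ℝ)) with hF
  have hsum : ∀ j ∈ Finset.range n, Summable fun k : Fin (d + 1) → ℤ =>
      (cyl v B).indicator (fun _ => (1 : ℝ)) (y + (j : ℝ) • v + fun i => (k i : ℝ)) :=
    fun j _ => summable_indicator (isBounded_cyl v hB) _
  let e : ℤ × (Fin d → ℤ) ≃ (Fin (d + 1) → ℤ) := Fin.snocEquiv (fun _ => ℤ)
  have hFG : ∀ p, (∑ j ∈ Finset.range n, (cyl v B).indicator (fun _ => (1 : ℝ))
      (y + (j : ℝ) • v + fun i => (e p i : ℝ))) = F p := by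
    rintro ⟨m, k⟩
    simp only [hF]
    rw [← hwin m, Finset.sum_mul]
    refine Finset.sum_congr rfl fun j _ => ?_
    have hshear : shear v (y + (j : ℝ) • v + fun i => (e (m, k) i : ℝ))
        = (y (Fin.last d) + m + j * v (Fin.last d),
            (shear v y).2 - (m : ℝ) • slope' v + fun i => (k i : ℝ)) := by
      ext i
      · simp [shear, e, Fin.snocEquiv]
        ring
      · simp [shear, e, Fin.snocEquiv, Fin.init, slope']
        field_simp
        ring
    rw [cyl_eq_preimage hc]
    classical
    simp only [Set.indicator_apply, Set.mem_preimage, hshear, Set.mem_prod, ite_and,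
      ite_mul, one_mul, zero_mul]
  have hFs : Summable F := by
    have := (e.summable_iff).2 (summable_sum hsum)
    exact this.congr hFG
  simp only [multFn]
  rw [← Summable.tsum_finsetSum hsum, ← e.tsum_eq, tsum_congr hFG, hFs.tsum_prod,
    tsum_eq_sum (s := Finset.Ico a b)]
  · refine Finset.sum_congr rfl fun m hm => tsum_congr fun k => ?_
    simp only [hF, if_pos hm, one_mul]
  · intro m hm
    simp only [hF, if_neg hm, zero_mul, tsum_zero]

lemma disc_eq_sum {d : ℕ} (v : Fin d → ℝ) (S : Set (Fin d → ℝ)) (n : ℕ) (x : Fin d → ℝ) :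
    disc v S n x = ∑ k ∈ Finset.range n, (multFn S (x + (k : ℝ) • v) - (volume S).toReal) := by
  simp [disc, Finset.sum_sub_distrib]

lemma isBRS_cyl {d : ℕ} {v : Fin (d + 1) → ℝ} (hc : v (Fin.last d) ≠ 0)
    {B : Set (Fin d → ℝ)} (hBbd : Bornology.IsBounded B) (hBmeas : MeasurableSet B)
    (hB : IsBRS (slope' v) B) : IsBRS v (cyl v B) := by
  obtain ⟨C, hC⟩ := hB
  have hC' : ∀ᵐ z : Fin d → ℝ, ∀ m : ℤ, ∀ n : ℕ, 1 ≤ n →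
      |disc (slope' v) B n (z - (m : ℝ) • slope' v)| ≤ C :=
    ae_all_iff.2 fun m =>
      (measurePreserving_sub_right volume ((m : ℝ) • slope' v)).quasiMeasurePreserving.ae hC
  have hC'' := (Measure.quasiMeasurePreserving_snd.comp
    (measurePreserving_shear v).quasiMeasurePreserving).ae hC'
  refine ⟨|C| + (volume B).toReal, ?_⟩
  filter_upwards [hC''] with y hy n _
  obtain ⟨a, b, hab, hlen, hsum⟩ := sum_multFn_cyl hc hBbd y n
  obtain ⟨N, rfl⟩ : ∃ N : ℕ, b = a + N := ⟨(b - a).toNat, by omega⟩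
  have hN : |((N : ℝ) - n * |v (Fin.last d)|)| ≤ 1 := by
    have : ((a + N : ℤ) : ℝ) - a = N := by push_cast; ring
    rwa [this] at hlen
  -- The window is read downwards, so that consecutive points differ by `+ slope' v`.
  have hD : disc (slope' v) B N ((shear v y).2 - ((a + N - 1 : ℤ) : ℝ) • slope' v)
      = (∑ m ∈ Finset.Ico a (a + N), multFn B ((shear v y).2 - (m : ℝ) • slope' v))
        - N * (volume B).toReal := by
    unfold disc
    congr 1
    refine Finset.sum_bij' (fun j _ => a + N - 1 - (j : ℤ)) (fun m _ => (a + N - 1 - m).toNat)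
      ?_ ?_ ?_ ?_ ?_
    · intro j hj
      simp only [Finset.mem_range, Finset.mem_Ico] at *
      omega
    · intro m hm
      simp only [Finset.mem_range, Finset.mem_Ico] at *
      omega
    · intro j hj
      simp
    · intro m hm
      simp only [Finset.mem_Ico] at hm
      omega
    · intro j _
      congr 1
      push_cast
      module
  have hDb : |disc (slope' v) B N ((shear v y).2 - ((a + N - 1 : ℤ) : ℝ) • slope' v)| ≤ |C| := by
    rcases Nat.eq_zero_or_pos N with rfl | hpos
    · simp [disc]
    · exact (hy _ N hpos).trans (le_abs_self C)
  have hsplit : disc v (cyl v B) n y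
      = disc (slope' v) B N ((shear v y).2 - ((a + N - 1 : ℤ) : ℝ) • slope' v)
        + (N - n * |v (Fin.last d)|) * (volume B).toReal := by
    rw [hD, ← hsum, disc, volume_cyl hc hBmeas]
    ring
  rw [hsplit]
  refine (abs_add_le _ _).trans (add_le_add hDb ?_)
  rw [abs_mul, abs_of_nonneg (ENNReal.toReal_nonneg (a := volume B))]
  exact mul_le_of_le_one_left ENNReal.toReal_nonneg hN

/-! ### From the rotation by `v` to the rotation by `α` -/

lemma sum_range_mul_eq (f : ℕ → ℝ) (Q m : ℕ) :
    ∑ k ∈ Finset.range (Q * m), f k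
      = ∑ r ∈ Finset.range Q, ∑ j ∈ Finset.range m, f (r + j * Q) := by
  induction m with
  | zero => simp
  | succ m ih =>
    rw [Nat.mul_succ, Finset.sum_range_add, ih, ← Finset.sum_add_distrib]
    refine Finset.sum_congr rfl fun r _ => ?_
    rw [Finset.sum_range_succ, add_comm r, mul_comm m]

/-- If the sums of `f` along all progressions of step `Q` are bounded by `C`, and so is `f`,
then the partial sums of `f` are bounded. -/
lemma abs_sum_range_le {f : ℕ → ℝ} {Q : ℕ} (hQ : 0 < Q) {C : ℝ} (h1 : ∀ k, |f k| ≤ C)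
    (h2 : ∀ r m, |∑ j ∈ Finset.range m, f (r + j * Q)| ≤ C) (n : ℕ) :
    |∑ k ∈ Finset.range n, f k| ≤ Q * C + Q * C := by
  have hC : 0 ≤ C := (abs_nonneg _).trans (h1 0)
  rw [← Nat.div_add_mod n Q, Finset.sum_range_add, sum_range_mul_eq]
  refine (abs_add_le _ _).trans (add_le_add ?_ ?_)
  · refine (Finset.abs_sum_le_sum_abs _ _).trans ((Finset.sum_le_sum fun r _ => h2 r _).trans ?_)
    simp
  · refine (Finset.abs_sum_le_sum_abs _ _).trans ((Finset.sum_le_sum fun r _ => h1 _).trans ?_)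
    have : ((n % Q : ℕ) : ℝ) ≤ Q := by exact_mod_cast (Nat.mod_lt n hQ).le
    simpa using mul_le_mul_of_nonneg_right this hC

lemma isBRS_of_lat {d : ℕ} {α v : Fin d → ℝ} {S : Set (Fin d → ℝ)} {q : ℤ} (hq : q ≠ 0)
    {p : Fin d → ℤ} (hv : v = (q : ℝ) • α + fun i => (p i : ℝ)) (hS : IsBRS v S) :
    IsBRS α S := by
  obtain ⟨C, hC⟩ := hS
  have hC' : ∀ᵐ x : Fin d → ℝ, ∀ k l : ℤ, ∀ n : ℕ, 1 ≤ n →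
      |disc v S n (x + ((k : ℝ) • α + (l : ℝ) • v))| ≤ C :=
    ae_all_iff.2 fun k => ae_all_iff.2 fun l =>
      (measurePreserving_add_right volume ((k : ℝ) • α + (l : ℝ) • v)).quasiMeasurePreserving.ae hC
  refine ⟨q.natAbs * C + q.natAbs * C, ?_⟩
  filter_upwards [hC'] with x hx n _
  have hC0 : 0 ≤ C := (abs_nonneg _).trans (hx 0 0 1 le_rfl)
  rw [disc_eq_sum]
  refine abs_sum_range_le (Int.natAbs_pos.2 hq) (fun k => ?_) (fun r m => ?_) n
  · have := hx k 0 1 le_rfl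
    simpa [disc_eq_sum] using this
  rcases Nat.eq_zero_or_pos m with rfl | hm
  · simpa using hC0
  rcases lt_or_gt_of_ne hq with h | h
  · have hqa : ((q.natAbs : ℕ) : ℝ) = -(q : ℝ) := by
      rw [Nat.cast_natAbs, abs_of_neg h]; simp
    -- Here `|q| α ≡ -v`, so the orbit is an orbit of `v` starting from its other end.
    have := hx r (-(m - 1 : ℤ)) m hm
    rw [disc_eq_sum] at this
    rw [← Finset.sum_range_reflect] at this
    convert this using 2
    refine Finset.sum_congr rfl fun j hj => ?_
    congr 1
    have hj' : j + 1 ≤ m := Finset.mem_range.1 hj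
    rw [← multFn_add_int S _ (-(j : ℤ) • p)]
    congr 1
    have hcast : ((m - 1 - j : ℕ) : ℝ) = m - 1 - j := by
      rw [Nat.sub_sub, Nat.cast_sub (by omega)]; push_cast; ring
    rw [hcast]
    ext i
    simp only [hv, Pi.add_apply, Pi.smul_apply, smul_eq_mul]
    push_cast
    rw [hqa]
    ring
  · have := hx r 0 m hm
    rw [disc_eq_sum] at this
    convert this using 2
    refine Finset.sum_congr rfl fun j hj => ?_
    congr 1
    have hqa : ((q.natAbs : ℕ) : ℝ) = (q : ℝ) := by
      rw [Nat.cast_natAbs, abs_of_pos h]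
    rw [← multFn_add_int S _ ((j : ℤ) • p)]
    congr 1
    ext i
    simp only [hv, Pi.add_apply, Pi.smul_apply, smul_eq_mul]
    push_cast
    rw [hqa]
    ring

/-- STATEMENT 15 (Liardet's cylinder construction), with the ambient dimension written
as `d + 1` where `d ≥ 1`: if `v ∈ ℤα + ℤ^{d+1}`, `v ∉ ℤ^{d+1}`, and `B ⊆ ℝ^d` is a BRS
with respect to `(v₁/v_{d+1}, …, v_d/v_{d+1})`, then the cylinder
`S = {(x,0) + t v : x ∈ B, 0 ≤ t < 1}` is a BRS with respect to `α`. -/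
theorem stmt15 {d : ℕ} (hd : 1 ≤ d) (α : Fin (d + 1) → ℝ) (hα : IsIrrationalVector α)
    (v : Fin (d + 1) → ℝ) (hv : v ∈ lat α)
    (hv' : ¬∃ p : Fin (d + 1) → ℤ, v = fun i => (p i : ℝ))
    (B : Set (Fin d → ℝ)) (hBbd : Bornology.IsBounded B) (hBmeas : MeasurableSet B)
    (hB : IsBRS (fun i : Fin d => v (Fin.castSucc i) / v (Fin.last d)) B) :
    IsBRS α {y : Fin (d + 1) → ℝ |
      ∃ x ∈ B, ∃ t : ℝ, 0 ≤ t ∧ t < 1 ∧ y = Fin.snoc x (0 : ℝ) + t • v} := by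
  obtain ⟨q, p, hqp⟩ := hv
  have hq : q ≠ 0 := by
    rintro rfl
    exact hv' ⟨p, by simpa using hqp⟩
  have hc : v (Fin.last d) ≠ 0 := by
    intro h0
    have h := hα (p (Fin.last d)) (Pi.single (Fin.last d) q) (by
      rw [Finset.sum_eq_single (Fin.last d)]
      · rw [hqp] at h0
        simp only [Pi.add_apply, Pi.smul_apply, smul_eq_mul] at h0
        rw [Pi.single_eq_same]
        linarith
      · intro i _ hi
        simp [Pi.single_eq_of_ne hi]
      · simp)
    exact hq (Pi.single_eq_zero_iff.1 h.2)
  exact isBRS_of_lat hq hqp (isBRS_cyl hc hBbd hBmeas hB)
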